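/- arXiv:1405.7891 — 2 statements merged into one kernel-verified Lean document; each statement's English description precedes it below -/
import Mathlib

section
/- Let Q(x,y) = x⁴ + y⁴ − 6x²y² and G(x,y) = Q(x,y) · log(x² + y²), defined for (x,y) ∈ ℝ² \ {(0,0)}. For parameters δ, η > 0 define the vector field u = δ ∇⊥(ΔG) + η (y, 0) on B₁ \ {0}, where ∇⊥f = (∂_y f, −∂_x f). Then u is divergence free on B₁ \ {0}, and there exists a function J, bounded on B₁ \ {0}, such that det(∇u)(x,y) = η δ ∂²(ΔG)/∂x²(x,y) + δ² J(x,y) for all 0 < x² + y² < 1. -/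
/-!
Since `Q` is harmonic and homogeneous of degree 4, `Δ(Q log r²) = 2 ∇Q · ∇(log r²) = 16 Q / r²`,
so the logarithm disappears: with `P = x²y²/(x²+y²)` one has `ΔG = 16 (x²+y²) - 128 P`
away from the origin (`lap_G`). Writing `H = ΔG`, equality of mixed partials gives `div u = 0`, and
expanding the determinant gives `det ∇u = η δ H_xx + δ² (H_xx H_yy - H_xy²)`. The second derivatives
of `H` are homogeneous of degree 0, hence bounded: explicitly
`H_xx = 32 - 256 y⁴(y² - 3x²)/r⁶`, `H_yy = 32 - 256 x⁴(x² - 3y²)/r⁶` and `H_xy = -1024 x³y³/r⁶`,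
and the numerators are at most `3 r⁶` in absolute value. So `J = H_xx H_yy - H_xy²` works.
-/

/-- Partial derivative in the first variable. -/
noncomputable def pdx (f : ℝ → ℝ → ℝ) (x y : ℝ) : ℝ := deriv (fun t => f t y) x

/-- Partial derivative in the second variable. -/
noncomputable def pdy (f : ℝ → ℝ → ℝ) (x y : ℝ) : ℝ := deriv (fun t => f x t) y

/-- The Laplacian `Δf = ∂²f/∂x² + ∂²f/∂y²`. -/
noncomputable def lap (f : ℝ → ℝ → ℝ) (x y : ℝ) : ℝ :=
  pdx (pdx f) x y + pdy (pdy f) x y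

/-- The polynomial `Q(x,y) = x⁴ + y⁴ − 6 x² y²`. -/
def Q (x y : ℝ) : ℝ := x ^ 4 + y ^ 4 - 6 * x ^ 2 * y ^ 2

/-- `G(x,y) = Q(x,y) log(x² + y²)`. -/
noncomputable def G (x y : ℝ) : ℝ := Q x y * Real.log (x ^ 2 + y ^ 2)

/-- First component of `u = δ ∇⊥(ΔG) + η (y, 0)`, where `∇⊥ f = (∂_y f, −∂_x f)`. -/
noncomputable def u₁ (δ η : ℝ) (x y : ℝ) : ℝ := δ * pdy (lap G) x y + η * y

/-- Second component of `u = δ ∇⊥(ΔG) + η (y, 0)`. -/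
noncomputable def u₂ (δ : ℝ) (x y : ℝ) : ℝ := -(δ * pdx (lap G) x y)

/-- Computes `∂f/∂x` off the origin from a formula `g` for `f` that is valid only off the origin. -/
lemma pdx_eq {f g g' : ℝ → ℝ → ℝ} (h : ∀ x y : ℝ, 0 < x ^ 2 + y ^ 2 → f x y = g x y)
    (hg : ∀ x y : ℝ, 0 < x ^ 2 + y ^ 2 → HasDerivAt (fun t => g t y) (g' x y) x)
    (x y : ℝ) (hs : 0 < x ^ 2 + y ^ 2) : pdx f x y = g' x y := by
  have hev : ∀ᶠ t in nhds x, 0 < t ^ 2 + y ^ 2 :=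
    ContinuousAt.eventually_lt (by fun_prop) (by fun_prop) hs
  have he : (fun t => f t y) =ᶠ[nhds x] fun t => g t y := by
    filter_upwards [hev] with t ht using h t y ht
  exact ((hg x y hs).congr_of_eventuallyEq he).deriv

/-- Computes `∂f/∂y` off the origin from a formula `g` for `f` that is valid only off the origin. -/
lemma pdy_eq {f g g' : ℝ → ℝ → ℝ} (h : ∀ x y : ℝ, 0 < x ^ 2 + y ^ 2 → f x y = g x y)
    (hg : ∀ x y : ℝ, 0 < x ^ 2 + y ^ 2 → HasDerivAt (fun t => g x t) (g' x y) y)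
    (x y : ℝ) (hs : 0 < x ^ 2 + y ^ 2) : pdy f x y = g' x y := by
  have hev : ∀ᶠ t in nhds y, 0 < x ^ 2 + t ^ 2 :=
    ContinuousAt.eventually_lt (by fun_prop) (by fun_prop) hs
  have he : (fun t => f x t) =ᶠ[nhds y] fun t => g x t := by
    filter_upwards [hev] with t ht using h x t ht
  exact ((hg x y hs).congr_of_eventuallyEq he).deriv

lemma hasDerivAt_sq_add (c x : ℝ) : HasDerivAt (fun t : ℝ => t ^ 2 + c ^ 2) (2 * x) x := by
  simpa using (hasDerivAt_pow 2 x).add_const (c ^ 2)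

lemma hasDerivAt_Q (c x : ℝ) :
    HasDerivAt (fun t : ℝ => Q t c) (4 * x ^ 3 - 12 * x * c ^ 2) x := by
  unfold Q
  have h := ((hasDerivAt_pow 4 x).add_const (c ^ 4)).sub
    (((hasDerivAt_pow 2 x).const_mul 6).mul_const (c ^ 2))
  refine h.congr_deriv ?_
  push_cast
  ring

lemma hasDerivAt_Q' (c x : ℝ) :
    HasDerivAt (fun t : ℝ => 4 * t ^ 3 - 12 * t * c ^ 2) (12 * x ^ 2 - 12 * c ^ 2) x := by
  have h := ((hasDerivAt_pow 3 x).const_mul 4).sub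
    (((hasDerivAt_id x).const_mul 12).mul_const (c ^ 2))
  refine h.congr_deriv ?_
  norm_num
  ring

lemma G_symm (x y : ℝ) : G x y = G y x := by
  unfold G Q
  rw [add_comm (x ^ 2) (y ^ 2)]
  ring

lemma hasDerivAt_G (x y : ℝ) (hs : 0 < x ^ 2 + y ^ 2) :
    HasDerivAt (fun t => G t y)
      ((4 * x ^ 3 - 12 * x * y ^ 2) * Real.log (x ^ 2 + y ^ 2)
        + Q x y * (2 * x / (x ^ 2 + y ^ 2))) x :=
  (hasDerivAt_Q y x).mul ((hasDerivAt_sq_add y x).log hs.ne')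

lemma hasDerivAt_G' (x y : ℝ) (hs : 0 < x ^ 2 + y ^ 2) :
    HasDerivAt (fun t => (4 * t ^ 3 - 12 * t * y ^ 2) * Real.log (t ^ 2 + y ^ 2)
        + Q t y * (2 * t / (t ^ 2 + y ^ 2)))
      ((12 * x ^ 2 - 12 * y ^ 2) * Real.log (x ^ 2 + y ^ 2)
        + (4 * x ^ 3 - 12 * x * y ^ 2) * (2 * x / (x ^ 2 + y ^ 2))
        + ((4 * x ^ 3 - 12 * x * y ^ 2) * (2 * x / (x ^ 2 + y ^ 2))
        + Q x y * ((2 * (x ^ 2 + y ^ 2) - 2 * x * (2 * x)) / (x ^ 2 + y ^ 2) ^ 2))) x := by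
  have h2 : HasDerivAt (fun t : ℝ => 2 * t) 2 x := by
    simpa using (hasDerivAt_id x).const_mul 2
  exact ((hasDerivAt_Q' y x).mul ((hasDerivAt_sq_add y x).log hs.ne')).add
    ((hasDerivAt_Q y x).mul (h2.div (hasDerivAt_sq_add y x) hs.ne'))

lemma lap_G (x y : ℝ) (hs : 0 < x ^ 2 + y ^ 2) :
    lap G x y = 16 * (x ^ 2 + y ^ 2) - 128 * (x ^ 2 * y ^ 2 / (x ^ 2 + y ^ 2)) := by
  have hx := pdx_eq (pdx_eq (fun _ _ _ => rfl) hasDerivAt_G) hasDerivAt_G' x y hs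
  -- `G` is symmetric, so its `y`-derivatives are the `x`-derivatives at the swapped point.
  have hy := pdy_eq
    (pdy_eq (fun x y _ => G_symm x y) fun a b h => hasDerivAt_G b a (by rwa [add_comm]))
    (fun a b h => hasDerivAt_G' b a (by rwa [add_comm])) x y hs
  have hs' : x ^ 2 + y ^ 2 ≠ 0 := hs.ne'
  unfold lap
  rw [hx, hy, add_comm (y ^ 2) (x ^ 2)]
  unfold Q
  field_simp
  ring

/-- The first derivative of `ΔG` in one variable; by symmetry it serves for both. -/
lemma hasDerivAt_H (x y : ℝ) (hs : 0 < x ^ 2 + y ^ 2) :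
    HasDerivAt (fun t => 16 * (t ^ 2 + y ^ 2) - 128 * (t ^ 2 * y ^ 2 / (t ^ 2 + y ^ 2)))
      (32 * x - 256 * (x * y ^ 4 / (x ^ 2 + y ^ 2) ^ 2)) x := by
  have hs' : x ^ 2 + y ^ 2 ≠ 0 := hs.ne'
  have h := ((hasDerivAt_sq_add y x).const_mul 16).sub
    ((((hasDerivAt_pow 2 x).mul_const (y ^ 2)).div (hasDerivAt_sq_add y x) hs').const_mul 128)
  refine h.congr_deriv ?_
  field_simp
  norm_num
  ring

/-- The repeated second derivative of `ΔG`. -/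
lemma hasDerivAt_H_same (x y : ℝ) (hs : 0 < x ^ 2 + y ^ 2) :
    HasDerivAt (fun t => 32 * t - 256 * (t * y ^ 4 / (t ^ 2 + y ^ 2) ^ 2))
      (32 - 256 * (y ^ 4 * (y ^ 2 - 3 * x ^ 2) / (x ^ 2 + y ^ 2) ^ 3)) x := by
  have hs' : x ^ 2 + y ^ 2 ≠ 0 := hs.ne'
  have h := ((hasDerivAt_id x).const_mul 32).sub
    ((((hasDerivAt_id x).mul_const (y ^ 4)).div ((hasDerivAt_sq_add y x).pow 2)
      (pow_ne_zero 2 hs')).const_mul 256)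
  refine h.congr_deriv ?_
  simp only [id, Pi.pow_apply]
  field_simp
  norm_num
  ring

/-- The mixed second derivative of `ΔG`; the formula is symmetric in the two variables. -/
lemma hasDerivAt_H_mixed (x y : ℝ) (hs : 0 < x ^ 2 + y ^ 2) :
    HasDerivAt (fun t => 32 * y - 256 * (y * t ^ 4 / (y ^ 2 + t ^ 2) ^ 2))
      (-1024 * (x ^ 3 * y ^ 3 / (x ^ 2 + y ^ 2) ^ 3)) x := by
  have hs' : x ^ 2 + y ^ 2 ≠ 0 := hs.ne'
  have he : ∀ t : ℝ, y ^ 2 + t ^ 2 = t ^ 2 + y ^ 2 := fun t => add_comm _ _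
  simp only [he]
  have h := ((((hasDerivAt_pow 4 x).const_mul y).div ((hasDerivAt_sq_add y x).pow 2)
      (pow_ne_zero 2 hs')).const_mul 256).const_sub (32 * y)
  refine h.congr_deriv ?_
  simp only [Pi.pow_apply]
  field_simp
  norm_num
  ring

lemma abs_H_same_le (x y : ℝ) (hs : 0 < x ^ 2 + y ^ 2) :
    |32 - 256 * (y ^ 4 * (y ^ 2 - 3 * x ^ 2) / (x ^ 2 + y ^ 2) ^ 3)| ≤ 800 := by
  have h : |y ^ 4 * (y ^ 2 - 3 * x ^ 2) / (x ^ 2 + y ^ 2) ^ 3| ≤ 3 := by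
    rw [abs_div, abs_of_pos (pow_pos hs 3), div_le_iff₀ (pow_pos hs 3), abs_mul]
    have h1 : |y ^ 4| ≤ (x ^ 2 + y ^ 2) ^ 2 := by
      rw [abs_of_nonneg (by positivity)]
      nlinarith [sq_nonneg (x * y), sq_nonneg (x ^ 2)]
    have h2 : |y ^ 2 - 3 * x ^ 2| ≤ 3 * (x ^ 2 + y ^ 2) := by
      rw [abs_le]
      constructor <;> nlinarith [sq_nonneg x, sq_nonneg y]
    calc _ ≤ (x ^ 2 + y ^ 2) ^ 2 * (3 * (x ^ 2 + y ^ 2)) := by gcongr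
      _ = _ := by ring
  rw [abs_le] at h ⊢
  constructor <;> linarith [h.1, h.2]

lemma abs_H_mixed_le (x y : ℝ) (hs : 0 < x ^ 2 + y ^ 2) :
    |-1024 * (x ^ 3 * y ^ 3 / (x ^ 2 + y ^ 2) ^ 3)| ≤ 1024 := by
  have h : |x ^ 3 * y ^ 3 / (x ^ 2 + y ^ 2) ^ 3| ≤ 1 := by
    rw [abs_div, abs_of_pos (pow_pos hs 3), div_le_one (pow_pos hs 3), ← mul_pow, abs_pow]
    gcongr
    rw [abs_le]
    constructor <;> nlinarith [sq_nonneg (x + y), sq_nonneg (x - y)]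
  rw [abs_mul]
  norm_num
  linarith

/-- The vector field `u = δ ∇⊥(ΔG) + η (y,0)` is divergence free on the punctured unit
ball, and `det(∇u) = η δ ∂²(ΔG)/∂x² + δ² J` with `J` bounded there. -/
theorem u_div_free_and_det_grad_u (δ η : ℝ) (hδ : 0 < δ) (hη : 0 < η) :
    (∀ x y : ℝ, 0 < x ^ 2 + y ^ 2 → x ^ 2 + y ^ 2 < 1 →
      pdx (u₁ δ η) x y + pdy (u₂ δ) x y = 0) ∧
    (∃ J : ℝ → ℝ → ℝ,
      (∃ M : ℝ, ∀ x y : ℝ, 0 < x ^ 2 + y ^ 2 → x ^ 2 + y ^ 2 < 1 → |J x y| ≤ M) ∧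
      (∀ x y : ℝ, 0 < x ^ 2 + y ^ 2 → x ^ 2 + y ^ 2 < 1 →
        pdx (u₁ δ η) x y * pdy (u₂ δ) x y - pdy (u₁ δ η) x y * pdx (u₂ δ) x y =
          η * δ * pdx (pdx (lap G)) x y + δ ^ 2 * J x y)) := by
  have Hx := pdx_eq lap_G hasDerivAt_H
  have Hy := pdy_eq (f := lap G)
    (g := fun x y => 16 * (y ^ 2 + x ^ 2) - 128 * (y ^ 2 * x ^ 2 / (y ^ 2 + x ^ 2)))
    (fun x y h => by rw [lap_G x y h, add_comm (y ^ 2), mul_comm (y ^ 2)])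
    (fun a b h => hasDerivAt_H b a (by rwa [add_comm]))
  have Hxx := pdx_eq Hx hasDerivAt_H_same
  have u1x := pdx_eq (f := u₁ δ η) (fun x y h => by rw [u₁, Hy x y h])
    (fun a b h => ((hasDerivAt_H_mixed a b h).const_mul δ).add_const (η * b))
  have u1y := pdy_eq (f := u₁ δ η) (fun x y h => by rw [u₁, Hy x y h]; rfl)
    (fun a b h => ((hasDerivAt_H_same b a (by rwa [add_comm])).const_mul δ).add
      ((hasDerivAt_id b).const_mul η))
  have u2x := pdx_eq (f := u₂ δ) (fun x y h => by rw [u₂, Hx x y h]; rfl)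
    (fun a b h => ((hasDerivAt_H_same a b h).const_mul δ).neg)
  have u2y := pdy_eq (f := u₂ δ) (fun x y h => by rw [u₂, Hx x y h]; rfl)
    (fun a b h => ((hasDerivAt_H_mixed b a (by rwa [add_comm])).const_mul δ).neg)
  refine ⟨fun x y h _ => ?_, fun x y =>
    (32 - 256 * (y ^ 4 * (y ^ 2 - 3 * x ^ 2) / (x ^ 2 + y ^ 2) ^ 3)) *
      (32 - 256 * (x ^ 4 * (x ^ 2 - 3 * y ^ 2) / (y ^ 2 + x ^ 2) ^ 3)) -
      (-1024 * (x ^ 3 * y ^ 3 / (x ^ 2 + y ^ 2) ^ 3)) ^ 2,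
    ⟨800 * 800 + 1024 ^ 2, fun x y h _ => ?_⟩, fun x y h _ => ?_⟩
  · rw [u1x x y h, u2y x y h, add_comm (y ^ 2) (x ^ 2)]
    ring
  · have h1 := abs_H_same_le x y h
    have h2 := abs_H_same_le y x (by rwa [add_comm])
    have h3 := abs_H_mixed_le x y h
    refine (abs_sub _ _).trans ?_
    rw [abs_mul, abs_pow]
    gcongr
  · rw [u1x x y h, u2y x y h, u1y x y h, u2x x y h, Hxx x y h, add_comm (y ^ 2) (x ^ 2)]
    ring
end

section
/- Let Q(x,y) = x⁴ + y⁴ − 6x²y² and G(x,y) = Q(x,y) · log(x² + y²), defined for (x,y) ∈ ℝ² \ {(0,0)}. Fix C > 0. Then for every η > 0 and every δ with 0 < δ ≤ 6η/C, and for every function K : B₁ \ {0} → ℝ satisfying |K(x,y)| ≤ C(1 + |log(x² + y²)|) on B₁ \ {0}, there exists r ∈ (0,1) such that |η δ ∂⁴G/∂x²∂y²(x,y) + δ² K(x,y)| ≥ 12 η δ |log(x² + y²)| for all (x,y) with 0 < x² + y² < r². -/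
/-- All the partial derivatives of `G` have the form `P log s + N / s ^ k` with polynomials
`P`, `N`; this is the differentiation rule for that form along a line where `s = t² + c`. -/
lemma hasDerivAt_form {P N : ℝ → ℝ} {P' N' c t : ℝ} (k : ℕ) (hP : HasDerivAt P P' t)
    (hN : HasDerivAt N N' t) (hs : t ^ 2 + c ≠ 0) :
    HasDerivAt (fun u => P u * Real.log (u ^ 2 + c) + N u / (u ^ 2 + c) ^ k)
      (P' * Real.log (t ^ 2 + c) +
        (P t * (2 * t) * (t ^ 2 + c) ^ k + N' * (t ^ 2 + c) - k * N t * (2 * t)) /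
          (t ^ 2 + c) ^ (k + 1)) t := by
  have h1 : HasDerivAt (fun u : ℝ => u ^ 2 + c) (2 * t) t := by
    simpa using (hasDerivAt_pow 2 t).add_const c
  have h2 := (hP.mul (h1.log hs)).add (hN.div (h1.pow k) (pow_ne_zero k hs))
  refine h2.congr_deriv ?_
  rcases k with _ | k
  · simp
    field_simp
    ring
  · simp only [Nat.add_sub_cancel, Pi.pow_apply]
    field_simp
    ring

lemma pdx_congr {f g : ℝ → ℝ → ℝ} (h : ∀ x y, x ^ 2 + y ^ 2 ≠ 0 → f x y = g x y) {x y : ℝ}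
    (hs : x ^ 2 + y ^ 2 ≠ 0) : pdx f x y = pdx g x y := by
  have hc : ContinuousAt (fun t : ℝ => t ^ 2 + y ^ 2) x := by fun_prop
  exact Filter.EventuallyEq.deriv_eq ((hc.eventually_ne hs).mono fun t ht => h t y ht)

lemma pdy_congr {f g : ℝ → ℝ → ℝ} (h : ∀ x y, x ^ 2 + y ^ 2 ≠ 0 → f x y = g x y) {x y : ℝ}
    (hs : x ^ 2 + y ^ 2 ≠ 0) : pdy f x y = pdy g x y := by
  have hc : ContinuousAt (fun t : ℝ => x ^ 2 + t ^ 2) y := by fun_prop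
  exact Filter.EventuallyEq.deriv_eq ((hc.eventually_ne hs).mono fun t ht => h x t ht)

lemma pdx_form (P N P' N' : ℝ → ℝ → ℝ) (k : ℕ) {x y : ℝ} (hs : x ^ 2 + y ^ 2 ≠ 0)
    (hP : HasDerivAt (fun t => P t y) (P' x y) x) (hN : HasDerivAt (fun t => N t y) (N' x y) x) :
    pdx (fun x y => P x y * Real.log (x ^ 2 + y ^ 2) + N x y / (x ^ 2 + y ^ 2) ^ k) x y =
      P' x y * Real.log (x ^ 2 + y ^ 2) +
        (P x y * (2 * x) * (x ^ 2 + y ^ 2) ^ k + N' x y * (x ^ 2 + y ^ 2)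
          - k * N x y * (2 * x)) / (x ^ 2 + y ^ 2) ^ (k + 1) :=
  (hasDerivAt_form k hP hN hs).deriv

lemma pdy_form (P N P' N' : ℝ → ℝ → ℝ) (k : ℕ) {x y : ℝ} (hs : x ^ 2 + y ^ 2 ≠ 0)
    (hP : HasDerivAt (fun t => P x t) (P' x y) y) (hN : HasDerivAt (fun t => N x t) (N' x y) y) :
    pdy (fun x y => P x y * Real.log (x ^ 2 + y ^ 2) + N x y / (x ^ 2 + y ^ 2) ^ k) x y =
      P' x y * Real.log (x ^ 2 + y ^ 2) +
        (P x y * (2 * y) * (x ^ 2 + y ^ 2) ^ k + N' x y * (x ^ 2 + y ^ 2)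
          - k * N x y * (2 * y)) / (x ^ 2 + y ^ 2) ^ (k + 1) := by
  have h := (hasDerivAt_form k hP hN (by rwa [add_comm])).deriv
  simp only [add_comm _ (x ^ 2)] at h
  exact h

lemma pdy_G {x y : ℝ} (hs : x ^ 2 + y ^ 2 ≠ 0) :
    pdy G x y =
      (4 * y ^ 3 - 12 * x ^ 2 * y) * Real.log (x ^ 2 + y ^ 2) +
        (2 * x ^ 4 * y - 12 * x ^ 2 * y ^ 3 + 2 * y ^ 5) /
          (x ^ 2 + y ^ 2) ^ 1 := by
  have hP : HasDerivAt (fun t : ℝ => x ^ 4 + t ^ 4 - 6 * x ^ 2 * t ^ 2) (4 * y ^ 3 - 12 * x ^ 2 * y) y := by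
    refine HasDerivAt.congr_deriv (DifferentiableAt.hasDerivAt (by fun_prop)) ?_
    simp (disch := fun_prop) [deriv_fun_add, deriv_fun_sub, deriv_fun_mul, deriv_fun_pow]
    ring
  have hN : HasDerivAt (fun _ : ℝ => (0 : ℝ))
      (0) y := by
    refine HasDerivAt.congr_deriv (DifferentiableAt.hasDerivAt (by fun_prop)) ?_
    simp
  rw [pdy_congr (g := fun x y =>
      (x ^ 4 + y ^ 4 - 6 * x ^ 2 * y ^ 2) * Real.log (x ^ 2 + y ^ 2) +
        (0) / (x ^ 2 + y ^ 2) ^ 0)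
    (fun x y _ => by simp [G, Q]) hs,
    pdy_form (fun x y => x ^ 4 + y ^ 4 - 6 * x ^ 2 * y ^ 2)
      (fun _ _ => 0)
      (fun x y => 4 * y ^ 3 - 12 * x ^ 2 * y)
      (fun _ _ => 0) 0 hs hP hN]
  push_cast
  ring

lemma pdyy_G {x y : ℝ} (hs : x ^ 2 + y ^ 2 ≠ 0) :
    pdy (pdy G) x y =
      (12 * y ^ 2 - 12 * x ^ 2) * Real.log (x ^ 2 + y ^ 2) +
        (2 * x ^ 6 - 62 * x ^ 4 * y ^ 2 - 18 * x ^ 2 * y ^ 4 + 14 * y ^ 6) /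
          (x ^ 2 + y ^ 2) ^ 2 := by
  have hP : HasDerivAt (fun t : ℝ => 4 * t ^ 3 - 12 * x ^ 2 * t) (12 * y ^ 2 - 12 * x ^ 2) y := by
    refine HasDerivAt.congr_deriv (DifferentiableAt.hasDerivAt (by fun_prop)) ?_
    simp (disch := fun_prop) [deriv_fun_sub, deriv_fun_mul, deriv_fun_pow]
    ring
  have hN : HasDerivAt (fun t : ℝ => 2 * x ^ 4 * t - 12 * x ^ 2 * t ^ 3 + 2 * t ^ 5)
      (2 * x ^ 4 - 36 * x ^ 2 * y ^ 2 + 10 * y ^ 4) y := by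
    refine HasDerivAt.congr_deriv (DifferentiableAt.hasDerivAt (by fun_prop)) ?_
    simp (disch := fun_prop) [deriv_fun_add, deriv_fun_sub, deriv_fun_mul, deriv_fun_pow]
    ring
  rw [pdy_congr (g := fun x y =>
      (4 * y ^ 3 - 12 * x ^ 2 * y) * Real.log (x ^ 2 + y ^ 2) +
        (2 * x ^ 4 * y - 12 * x ^ 2 * y ^ 3 + 2 * y ^ 5) / (x ^ 2 + y ^ 2) ^ 1)
    (fun x y h => pdy_G h) hs,
    pdy_form (fun x y => 4 * y ^ 3 - 12 * x ^ 2 * y)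
      (fun x y => 2 * x ^ 4 * y - 12 * x ^ 2 * y ^ 3 + 2 * y ^ 5)
      (fun x y => 12 * y ^ 2 - 12 * x ^ 2)
      (fun x y => 2 * x ^ 4 - 36 * x ^ 2 * y ^ 2 + 10 * y ^ 4) 1 hs hP hN]
  push_cast
  ring

lemma pdxyy_G {x y : ℝ} (hs : x ^ 2 + y ^ 2 ≠ 0) :
    pdx (pdy (pdy G)) x y =
      (-24 * x) * Real.log (x ^ 2 + y ^ 2) +
        (-20 * x ^ 7 - 12 * x ^ 5 * y ^ 2 - 188 * x ^ 3 * y ^ 4 - 68 * x * y ^ 6) /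
          (x ^ 2 + y ^ 2) ^ 3 := by
  have hP : HasDerivAt (fun t : ℝ => 12 * y ^ 2 - 12 * t ^ 2) (-24 * x) x := by
    refine HasDerivAt.congr_deriv (DifferentiableAt.hasDerivAt (by fun_prop)) ?_
    simp (disch := fun_prop) [deriv_fun_sub, deriv_fun_mul, deriv_fun_pow]
    ring
  have hN : HasDerivAt (fun t : ℝ => 2 * t ^ 6 - 62 * t ^ 4 * y ^ 2 - 18 * t ^ 2 * y ^ 4 + 14 * y ^ 6)
      (12 * x ^ 5 - 248 * x ^ 3 * y ^ 2 - 36 * x * y ^ 4) x := by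
    refine HasDerivAt.congr_deriv (DifferentiableAt.hasDerivAt (by fun_prop)) ?_
    simp (disch := fun_prop) [deriv_fun_add, deriv_fun_sub, deriv_fun_mul, deriv_fun_pow]
    ring
  rw [pdx_congr (g := fun x y =>
      (12 * y ^ 2 - 12 * x ^ 2) * Real.log (x ^ 2 + y ^ 2) +
        (2 * x ^ 6 - 62 * x ^ 4 * y ^ 2 - 18 * x ^ 2 * y ^ 4 + 14 * y ^ 6) / (x ^ 2 + y ^ 2) ^ 2)
    (fun x y h => pdyy_G h) hs,
    pdx_form (fun x y => 12 * y ^ 2 - 12 * x ^ 2)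
      (fun x y => 2 * x ^ 6 - 62 * x ^ 4 * y ^ 2 - 18 * x ^ 2 * y ^ 4 + 14 * y ^ 6)
      (fun x y => -24 * x)
      (fun x y => 12 * x ^ 5 - 248 * x ^ 3 * y ^ 2 - 36 * x * y ^ 4) 2 hs hP hN]
  push_cast
  ring

lemma pdxxyy_G {x y : ℝ} (hs : x ^ 2 + y ^ 2 ≠ 0) :
    pdx (pdx (pdy (pdy G))) x y =
      (-24) * Real.log (x ^ 2 + y ^ 2) +
        (-68 * (x ^ 2 + y ^ 2) ^ 4 + 768 * x ^ 4 * y ^ 4) /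
          (x ^ 2 + y ^ 2) ^ 4 := by
  have hP : HasDerivAt (fun t : ℝ => -24 * t) (-24) x := by
    refine HasDerivAt.congr_deriv (DifferentiableAt.hasDerivAt (by fun_prop)) ?_
    simp
  have hN : HasDerivAt (fun t : ℝ => -20 * t ^ 7 - 12 * t ^ 5 * y ^ 2 - 188 * t ^ 3 * y ^ 4 - 68 * t * y ^ 6)
      (-140 * x ^ 6 - 60 * x ^ 4 * y ^ 2 - 564 * x ^ 2 * y ^ 4 - 68 * y ^ 6) x := by
    refine HasDerivAt.congr_deriv (DifferentiableAt.hasDerivAt (by fun_prop)) ?_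
    simp (disch := fun_prop) [deriv_fun_sub, deriv_fun_mul, deriv_fun_pow]
    ring
  rw [pdx_congr (g := fun x y =>
      (-24 * x) * Real.log (x ^ 2 + y ^ 2) +
        (-20 * x ^ 7 - 12 * x ^ 5 * y ^ 2 - 188 * x ^ 3 * y ^ 4 - 68 * x * y ^ 6) / (x ^ 2 + y ^ 2) ^ 3)
    (fun x y h => pdxyy_G h) hs,
    pdx_form (fun x y => -24 * x)
      (fun x y => -20 * x ^ 7 - 12 * x ^ 5 * y ^ 2 - 188 * x ^ 3 * y ^ 4 - 68 * x * y ^ 6)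
      (fun x y => -24)
      (fun x y => -140 * x ^ 6 - 60 * x ^ 4 * y ^ 2 - 564 * x ^ 2 * y ^ 4 - 68 * y ^ 6) 3 hs hP hN]
  push_cast
  ring

lemma remainder_bound {x y : ℝ} (hs : 0 < x ^ 2 + y ^ 2) :
    |(-68 * (x ^ 2 + y ^ 2) ^ 4 + 768 * x ^ 4 * y ^ 4) / (x ^ 2 + y ^ 2) ^ 4| ≤ 68 := by
  have h4 : 0 < (x ^ 2 + y ^ 2) ^ 4 := by positivity
  have h0 : 0 ≤ x ^ 4 * y ^ 4 := by positivity
  -- The arithmetic-geometric mean inequality `4 x² y² ≤ s²`, squared.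
  have h1 : 16 * (x ^ 4 * y ^ 4) ≤ (x ^ 2 + y ^ 2) ^ 4 := by
    have h : 4 * (x ^ 2 * y ^ 2) ≤ (x ^ 2 + y ^ 2) ^ 2 := by
      nlinarith [sq_nonneg (x ^ 2 - y ^ 2)]
    calc 16 * (x ^ 4 * y ^ 4) = (4 * (x ^ 2 * y ^ 2)) ^ 2 := by ring
      _ ≤ ((x ^ 2 + y ^ 2) ^ 2) ^ 2 := by gcongr
      _ = (x ^ 2 + y ^ 2) ^ 4 := by ring
  rw [abs_le, le_div_iff₀ h4, div_le_iff₀ h4]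
  constructor <;> linarith

/-- The logarithmic singularity of `η δ ∂⁴G/∂x²∂y²` survives any perturbation of size
`δ²` with at most logarithmic growth, provided `δ ≤ 6η/C`. -/
theorem log_singularity_survives_perturbation (C : ℝ) (hC : 0 < C) :
    ∀ η : ℝ, 0 < η → ∀ δ : ℝ, 0 < δ → δ ≤ 6 * η / C →
      ∀ K : ℝ → ℝ → ℝ,
        (∀ x y : ℝ, 0 < x ^ 2 + y ^ 2 → x ^ 2 + y ^ 2 < 1 →
          |K x y| ≤ C * (1 + |Real.log (x ^ 2 + y ^ 2)|)) →
        ∃ r : ℝ, 0 < r ∧ r < 1 ∧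
          ∀ x y : ℝ, 0 < x ^ 2 + y ^ 2 → x ^ 2 + y ^ 2 < r ^ 2 →
            12 * η * δ * |Real.log (x ^ 2 + y ^ 2)| ≤
              |η * δ * pdx (pdx (pdy (pdy G))) x y + δ ^ 2 * K x y| := by
  intro η hη δ hδ hδC K hK
  refine ⟨Real.exp (-7), Real.exp_pos _, by simp, ?_⟩
  intro x y hs hsr
  have hlog : Real.log (x ^ 2 + y ^ 2) < -14 := by
    rw [Real.log_lt_iff_lt_exp hs]
    refine hsr.trans_eq ?_
    rw [← Real.exp_nat_mul]
    norm_num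
  have hs1 : x ^ 2 + y ^ 2 < 1 := (Real.log_neg_iff hs).1 (by linarith)
  have hKxy := hK x y hs hs1
  have hR := remainder_bound hs
  rw [pdxxyy_G hs.ne']
  generalize (-68 * (x ^ 2 + y ^ 2) ^ 4 + 768 * x ^ 4 * y ^ 4) / (x ^ 2 + y ^ 2) ^ 4 = R at hR ⊢
  generalize Real.log (x ^ 2 + y ^ 2) = L at *
  rw [abs_of_neg (by linarith : L < 0)] at *
  have hCδ : δ * C ≤ 6 * η := (le_div_iff₀ hC).1 hδC
  have hpert : |δ * K x y| ≤ 6 * η * (1 + -L) := by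
    rw [abs_mul, abs_of_pos hδ]
    calc δ * |K x y| ≤ δ * (C * (1 + -L)) := by gcongr
      _ = δ * C * (1 + -L) := by ring
      _ ≤ 6 * η * (1 + -L) := by
        gcongr
        linarith
  -- The main term `-24 L` is positive, so the lower bound holds without the absolute value.
  refine le_trans ?_ (le_abs_self _)
  have hmain : 12 * η * -L ≤ η * (-24 * L + R) + δ * K x y := by
    have h1 := (abs_le.1 hpert).1
    have h2 := (abs_le.1 hR).1
    have h3 : 0 ≤ η * (6 * -L - 74) := mul_nonneg hη.le (by linarith)
    have h4 : 0 ≤ η * (R + 68) := mul_nonneg hη.le (by linarith)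
    linarith
  calc 12 * η * δ * -L = δ * (12 * η * -L) := by ring
    _ ≤ δ * (η * (-24 * L + R) + δ * K x y) := by gcongr
    _ = _ := by ring
end
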